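/- arXiv:1605.03510 — 2 statements merged into one kernel-verified Lean document; each statement's English description precedes it below -/
import Mathlib

section
/- Let (ρ, u) be a smooth solution of (QNS_ε) on (0,T) × T^d. Then for every t ∈ (0,T): (d/dt) ∫_{T^d} [ ρ|u|²/2 + ρ^γ/(γ−1) + f_ε(ρ) + 2κ² |h_ε'(ρ) ∇√ρ|² ] dx + 2ν ∫_{T^d} h_ε(ρ) |Du|² dx + 2ν ∫_{T^d} g_ε(ρ) (div u)² dx + ∫_{T^d} p̃_ε(ρ) |u|² dx = 0. -/
open MeasureTheory Real

noncomputable section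

/-- Partial derivative of a scalar field in the coordinate direction `i`. -/
def pd {d : ℕ} (i : Fin d) (f : (Fin d → ℝ) → ℝ) (x : Fin d → ℝ) : ℝ :=
  fderiv ℝ f x (Pi.single i 1)

/-- Gradient of a scalar field. -/
def grad {d : ℕ} (f : (Fin d → ℝ) → ℝ) (x : Fin d → ℝ) : Fin d → ℝ :=
  fun i => pd i f x

/-- Divergence of a vector field. -/
def dvg {d : ℕ} (u : (Fin d → ℝ) → (Fin d → ℝ)) (x : Fin d → ℝ) : ℝ :=
  ∑ i, pd i (fun y => u y i) x

/-- Row-wise divergence of a matrix field: `(dvgM M x) i = ∑ j, ∂_j M_{ij}`. -/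
def dvgM {d : ℕ} (M : (Fin d → ℝ) → Fin d → Fin d → ℝ) (x : Fin d → ℝ) : Fin d → ℝ :=
  fun i => ∑ j, pd j (fun y => M y i j) x

/-- Hessian of a scalar field. -/
def hess {d : ℕ} (f : (Fin d → ℝ) → ℝ) (x : Fin d → ℝ) : Fin d → Fin d → ℝ :=
  fun i j => pd i (fun y => pd j f y) x

/-- Laplacian of a scalar field. -/
def lap {d : ℕ} (f : (Fin d → ℝ) → ℝ) (x : Fin d → ℝ) : ℝ :=
  ∑ i, pd i (fun y => pd i f y) x

/-- Jacobian matrix of a vector field: `(jac u x) i j = ∂_j u_i`. -/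
def jac {d : ℕ} (u : (Fin d → ℝ) → (Fin d → ℝ)) (x : Fin d → ℝ) : Fin d → Fin d → ℝ :=
  fun i j => pd j (fun y => u y i) x

/-- Symmetric part of the gradient of a vector field, `Du = (∇u + (∇u)ᵀ)/2`. -/
def symD {d : ℕ} (u : (Fin d → ℝ) → (Fin d → ℝ)) (x : Fin d → ℝ) : Fin d → Fin d → ℝ :=
  fun i j => (jac u x i j + jac u x j i) / 2

/-- Antisymmetric part of the gradient of a vector field, `Au = (∇u − (∇u)ᵀ)/2`. -/
def antiD {d : ℕ} (u : (Fin d → ℝ) → (Fin d → ℝ)) (x : Fin d → ℝ) : Fin d → Fin d → ℝ :=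
  fun i j => (jac u x i j - jac u x j i) / 2

/-- Tensor product of two vectors: `(a ⊗ b)_{ij} = a_i b_j`. -/
def tens {d : ℕ} (a b : Fin d → ℝ) : Fin d → Fin d → ℝ := fun i j => a i * b j

/-- ℤ^d-periodicity: a function of this kind descends to the torus `T^d = ℝ^d/ℤ^d`. -/
def SpacePeriodic {d : ℕ} {E : Type*} (f : (Fin d → ℝ) → E) : Prop :=
  ∀ x : Fin d → ℝ, ∀ n : Fin d → ℤ, f (x + fun i => (n i : ℝ)) = f x

/-- Fundamental domain of the torus `T^d = ℝ^d/ℤ^d` (with its probability Lebesgue measure). -/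
def unitBox (d : ℕ) : Set (Fin d → ℝ) := Set.Icc 0 1

/-- The approximating viscosity coefficient `h_ε(r) = r + ε r^{7/8} + ε r^γ`. -/
def hfun (ε γ r : ℝ) : ℝ := r + ε * r ^ ((7 : ℝ) / 8) + ε * r ^ γ

/-- `g_ε(r) = r h_ε'(r) − h_ε(r)`. -/
def gfun (ε γ r : ℝ) : ℝ := r * deriv (hfun ε γ) r - hfun ε γ r

/-- `λ(ε) = e^{−1/ε⁴}`. -/
def lamfun (ε : ℝ) : ℝ := Real.exp (-1 / ε ^ 4)

/-- The damping coefficient `p̃_ε(r) = λ(ε)(r^{1/ε²} + r^{−1/ε²})`. -/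
def ptil (ε r : ℝ) : ℝ := lamfun ε * (r ^ (1 / ε ^ 2) + r ^ (-(1 / ε ^ 2)))

/-- `μ = ν − √(ν² − κ²)`. -/
def muof (ν κ : ℝ) : ℝ := ν - Real.sqrt (ν ^ 2 - κ ^ 2)

/-- `p_ε` is an antiderivative on `(0,∞)` of `r ↦ μ p̃_ε(r) h_ε'(r) / r`. -/
def IsPeps (ε γ ν κ : ℝ) (P : ℝ → ℝ) : Prop :=
  ∀ r : ℝ, 0 < r → HasDerivAt P (muof ν κ * ptil ε r * deriv (hfun ε γ) r / r) r

/-- `φ_ε` is a smooth function on `(0,∞)` with `r φ_ε'(r) = h_ε'(r)`. -/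
def IsPhieps (ε γ : ℝ) (Φ : ℝ → ℝ) : Prop :=
  ContDiffOn ℝ (⊤ : ℕ∞) Φ (Set.Ioi 0) ∧ ∀ r : ℝ, 0 < r → r * deriv Φ r = deriv (hfun ε γ) r

/-- `f_ε` satisfies `r f_ε'(r) − f_ε(r) = p_ε(r)` on `(0,∞)`. -/
def IsFeps (P F : ℝ → ℝ) : Prop :=
  (∀ r : ℝ, 0 < r → DifferentiableAt ℝ F r) ∧
  ∀ r : ℝ, 0 < r → r * deriv F r - F r = P r

/-- The vector field `∇( h_ε'(ρ) div(h_ε'(ρ) ∇√ρ) / √ρ )`; the capillarity term of (QNS_ε) is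
`2 κ² ρ` times this field. -/
def Kvec {d : ℕ} (ε γ : ℝ) (ρ : (Fin d → ℝ) → ℝ) (x : Fin d → ℝ) : Fin d → ℝ :=
  grad (fun y => deriv (hfun ε γ) (ρ y) *
      dvg (fun z => deriv (hfun ε γ) (ρ z) • grad (fun w => Real.sqrt (ρ w)) z) y /
      Real.sqrt (ρ y)) x

/-- A smooth solution of the approximating system (QNS_ε) on `(0,T) × T^d`:
a pair of `C^∞` functions on `[0,T] × T^d` with `ρ > 0` everywhere, satisfying the continuity
equation and the momentum equation pointwise. -/
def IsQNSSol (d : ℕ) (ε γ ν κ T : ℝ) (P : ℝ → ℝ)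
    (ρ : ℝ → (Fin d → ℝ) → ℝ) (u : ℝ → (Fin d → ℝ) → (Fin d → ℝ)) : Prop :=
  ContDiffOn ℝ (⊤ : ℕ∞) (fun p : ℝ × (Fin d → ℝ) => ρ p.1 p.2) (Set.Icc 0 T ×ˢ Set.univ) ∧
  ContDiffOn ℝ (⊤ : ℕ∞) (fun p : ℝ × (Fin d → ℝ) => u p.1 p.2) (Set.Icc 0 T ×ˢ Set.univ) ∧
  (∀ t x, 0 < ρ t x) ∧
  (∀ t, SpacePeriodic (ρ t)) ∧
  (∀ t, SpacePeriodic (u t)) ∧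
  (∀ t ∈ Set.Ioo 0 T, ∀ x : Fin d → ℝ,
    deriv (fun s => ρ s x) t + dvg (fun y => ρ t y • u t y) x = 0) ∧
  (∀ t ∈ Set.Ioo 0 T, ∀ x : Fin d → ℝ, ∀ i : Fin d,
    deriv (fun s => ρ s x * u s x i) t
      + dvgM (fun y i' j => ρ t y * u t y i' * u t y j) x i
      + grad (fun y => ρ t y ^ γ + P (ρ t y)) x i
      + ptil ε (ρ t x) * u t x i
    = 2 * ν * dvgM (fun y i' j => hfun ε γ (ρ t y) * symD (u t) y i' j) x i
      + 2 * ν * grad (fun y => gfun ε γ (ρ t y) * dvg (u t) y) x i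
      + 2 * κ ^ 2 * ρ t x * Kvec ε γ (ρ t) x i)

/-! ### Helper material -/

/-- Directional derivative of a function on space-time. -/
def Dd {d : ℕ} (v : ℝ × (Fin d → ℝ)) (f : ℝ × (Fin d → ℝ) → ℝ) (p : ℝ × (Fin d → ℝ)) : ℝ :=
  fderiv ℝ f p v

/-- Time direction. -/
def et (d : ℕ) : ℝ × (Fin d → ℝ) := (1, 0)

/-- Space directions. -/
def ex {d : ℕ} (i : Fin d) : ℝ × (Fin d → ℝ) := (0, Pi.single i 1)

/-- Open space-time slab. -/
def slab (d : ℕ) (T : ℝ) : Set (ℝ × (Fin d → ℝ)) := Set.Ioo 0 T ×ˢ Set.univ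

/-- Smooth on the slab, and periodic in space. -/
structure SP {d : ℕ} (T : ℝ) (f : ℝ × (Fin d → ℝ) → ℝ) : Prop where
  smooth : ContDiffOn ℝ (⊤ : ℕ∞) f (slab d T)
  per : ∀ (n : Fin d → ℤ) p, f (p + (0, fun i => (n i : ℝ))) = f p

lemma slab_open (d : ℕ) (T : ℝ) : IsOpen (slab d T) := isOpen_Ioo.prod isOpen_univ

section helpers
variable {d : ℕ} {T : ℝ} {f g : ℝ × (Fin d → ℝ) → ℝ}

lemma SP.diff (hf : SP T f) {p} (hp : p ∈ slab d T) : DifferentiableAt ℝ f p :=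
  ((hf.smooth.contDiffAt ((slab_open d T).mem_nhds hp)).differentiableAt (by simp))

lemma SP.add (hf : SP T f) (hg : SP T g) : SP T (fun p => f p + g p) :=
  ⟨hf.smooth.add hg.smooth, fun n p => by simp only [hf.per, hg.per]⟩

lemma SP.mul (hf : SP T f) (hg : SP T g) : SP T (fun p => f p * g p) :=
  ⟨hf.smooth.mul hg.smooth, fun n p => by simp only [hf.per, hg.per]⟩

lemma SP.const (c : ℝ) : SP (d := d) T (fun _ => c) :=
  ⟨contDiffOn_const, fun _ _ => rfl⟩

lemma SP.sum {ι : Type*} (s : Finset ι) {f : ι → ℝ × (Fin d → ℝ) → ℝ} (hf : ∀ i, SP T (f i)) :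
    SP T (fun p => ∑ i ∈ s, f i p) :=
  ⟨ContDiffOn.sum fun i _ => (hf i).smooth, fun n p => by simp only [(hf _).per]⟩

lemma SP.dd (hf : SP T f) (v) : SP T (Dd v f) := by
  refine ⟨?_, fun n p => ?_⟩
  · have := hf.smooth.fderiv_of_isOpen (m := (⊤ : ℕ∞)) (slab_open d T) (by simp)
    exact this.clm_apply contDiffOn_const
  · unfold Dd
    rw [← fderiv_comp_add_right]
    congr 2
    funext q
    exact hf.per n q

lemma SP.comp {φ : ℝ → ℝ} (hφ : ContDiffOn ℝ (⊤ : ℕ∞) φ (Set.Ioi 0)) (hf : SP T f)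
    (hpos : ∀ p, 0 < f p) : SP T (fun p => φ (f p)) :=
  ⟨hφ.comp hf.smooth fun p _ => hpos p, fun n p => by simp only [hf.per]⟩

lemma Dd_add (hf : SP T f) (hg : SP T g) {p} (hp : p ∈ slab d T) (v) :
    Dd v (fun p => f p + g p) p = Dd v f p + Dd v g p := by
  unfold Dd
  rw [fderiv_fun_add (hf.diff hp) (hg.diff hp)]; rfl

lemma Dd_mul (hf : SP T f) (hg : SP T g) {p} (hp : p ∈ slab d T) (v) :
    Dd v (fun p => f p * g p) p = Dd v f p * g p + f p * Dd v g p := by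
  unfold Dd
  rw [fderiv_fun_mul (hf.diff hp) (hg.diff hp)]
  simp; ring

lemma Dd_cmul (c : ℝ) (hf : SP T f) {p} (hp : p ∈ slab d T) (v) :
    Dd v (fun p => c * f p) p = c * Dd v f p := by
  unfold Dd
  rw [fderiv_const_mul (hf.diff hp)]; rfl

lemma Dd_sum {ι : Type*} (s : Finset ι) {f : ι → ℝ × (Fin d → ℝ) → ℝ} (hf : ∀ i, SP T (f i)) {p}
    (hp : p ∈ slab d T) (v) :
    Dd v (fun p => ∑ i ∈ s, f i p) p = ∑ i ∈ s, Dd v (f i) p := by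
  unfold Dd
  rw [fderiv_fun_sum fun i _ => (hf i).diff hp]
  simp

lemma Dd_congr (h : ∀ p ∈ slab d T, f p = g p) {p} (hp : p ∈ slab d T) (v) :
    Dd v f p = Dd v g p := by
  unfold Dd
  rw [Filter.EventuallyEq.fderiv_eq]
  filter_upwards [(slab_open d T).mem_nhds hp] with q hq using h q hq

lemma Dd_comm (hf : SP T f) {p} (hp : p ∈ slab d T) (v w) :
    Dd v (Dd w f) p = Dd w (Dd v f) p := by
  have hc := hf.smooth.contDiffAt ((slab_open d T).mem_nhds hp)
  have hs := hc.isSymmSndFDerivAt (by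
    rw [minSmoothness_of_isRCLikeNormedField]; exact WithTop.coe_le_coe.2 le_top)
  have h1 : DifferentiableAt ℝ (fderiv ℝ f) p :=
    (hc.fderiv_right (m := 1) (by norm_cast)).differentiableAt (by simp)
  have key : ∀ a b, Dd a (Dd b f) p = fderiv ℝ (fderiv ℝ f) p a b := by
    intro a b
    change fderiv ℝ (fun q => fderiv ℝ f q b) p a = _
    rw [fderiv_clm_apply h1 (differentiableAt_const b)]
    simp
  rw [key, key]
  exact hs v w

lemma Dd_comp {φ : ℝ → ℝ} (hf : SP T f) {p} (hp : p ∈ slab d T)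
    (hφ : DifferentiableAt ℝ φ (f p)) (v) :
    Dd v (fun p => φ (f p)) p = deriv φ (f p) * Dd v f p := by
  unfold Dd
  have := (hφ.hasDerivAt.comp_hasFDerivAt p (hf.diff hp).hasFDerivAt).fderiv
  rw [show (fun p => φ (f p)) = φ ∘ f from rfl, this]
  simp

lemma pd_slice (hf : SP T f) {t : ℝ} (ht : t ∈ Set.Ioo 0 T) (x : Fin d → ℝ) (i : Fin d) :
    pd i (fun y => f (t, y)) x = Dd (ex i) f (t, x) := by
  unfold pd Dd
  have h := (hf.diff (p := (t, x)) ⟨ht, trivial⟩).hasFDerivAt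
  have h2 := h.comp x (hasFDerivAt_prodMk_right (𝕜 := ℝ) t x)
  rw [show (fun y => f (t, y)) = f ∘ (fun y => (t, y)) from rfl, h2.fderiv]
  rfl

lemma hasDerivAt_slice (hf : SP T f) {t : ℝ} (ht : t ∈ Set.Ioo 0 T) (x : Fin d → ℝ) :
    HasDerivAt (fun s => f (s, x)) (Dd (et d) f (t, x)) t := by
  have h := (hf.diff (p := (t, x)) ⟨ht, trivial⟩).hasFDerivAt
  exact (h.comp t (hasFDerivAt_prodMk_left (𝕜 := ℝ) t x)).hasDerivAt

lemma SP.cont_slice (hf : SP T f) {t : ℝ} (ht : t ∈ Set.Ioo 0 T) :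
    Continuous (fun x => f (t, x)) := by
  have := hf.smooth.continuousOn.comp_continuous (f := fun x : Fin d → ℝ => (t, x))
    (by fun_prop) (fun x => ⟨ht, trivial⟩)
  exact this

lemma SP.integrableOn (hf : SP T f) {t : ℝ} (ht : t ∈ Set.Ioo 0 T) :
    IntegrableOn (fun x => f (t, x)) (unitBox d) :=
  (hf.cont_slice ht).continuousOn.integrableOn_compact isCompact_Icc

lemma hasDerivAt_int (hf : SP T f) {t : ℝ} (ht : t ∈ Set.Ioo 0 T) :
    HasDerivAt (fun s => ∫ x in unitBox d, f (s, x))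
      (∫ x in unitBox d, Dd (et d) f (t, x)) t := by
  obtain ⟨δ, hδ, hsub⟩ := Metric.nhds_basis_closedBall.mem_iff.1 (isOpen_Ioo.mem_nhds ht)
  have hcomp : IsCompact (Metric.closedBall t δ ×ˢ unitBox d) :=
    (isCompact_closedBall t δ).prod isCompact_Icc
  obtain ⟨C, hC⟩ := hcomp.exists_bound_of_continuousOn (f := Dd (et d) f)
    ((hf.dd _).smooth.continuousOn.mono (by
      rintro ⟨s, x⟩ ⟨hs, _⟩
      exact ⟨hsub hs, trivial⟩))
  have := hasDerivAt_integral_of_dominated_loc_of_deriv_le (𝕜 := ℝ)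
    (μ := volume.restrict (unitBox d)) (F := fun s x => f (s, x))
    (F' := fun s x => Dd (et d) f (s, x)) (x₀ := t) (s := Metric.closedBall t δ)
    (bound := fun _ => C) (Metric.closedBall_mem_nhds t hδ) ?_ (hf.integrableOn ht)
    ((hf.dd _).cont_slice ht).aestronglyMeasurable ?_ ?_ ?_
  · exact this.2
  · filter_upwards [isOpen_Ioo.mem_nhds ht] with s hs
    exact (hf.cont_slice hs).aestronglyMeasurable
  · refine (ae_restrict_iff' measurableSet_Icc).2 (Filter.Eventually.of_forall ?_)
    intro x hx s hs
    exact hC (s, x) ⟨hs, hx⟩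
  · exact (continuous_const.continuousOn.integrableOn_compact isCompact_Icc)
  · exact Filter.Eventually.of_forall fun x s hs => hasDerivAt_slice hf (hsub hs) x

lemma integral_div_zero (hd : 1 ≤ d) {W : Fin d → ℝ × (Fin d → ℝ) → ℝ} (hW : ∀ i, SP T (W i))
    {t : ℝ} (ht : t ∈ Set.Ioo 0 T) :
    ∫ x in unitBox d, ∑ i, Dd (ex i) (W i) (t, x) = 0 := by
  obtain ⟨n, rfl⟩ : ∃ n, d = n + 1 := ⟨d - 1, by omega⟩
  have hfd : ∀ i x, HasFDerivAt (fun y => W i (t, y))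
      (fderiv ℝ (fun y => W i (t, y)) x) x := by
    intro i x
    have h := ((hW i).diff (p := (t, x)) ⟨ht, trivial⟩).hasFDerivAt
    exact (h.comp x (hasFDerivAt_prodMk_right (𝕜 := ℝ) t x)).differentiableAt.hasFDerivAt
  have key := integral_divergence_of_hasFDerivAt_off_countable (n := n) (E := ℝ)
    (a := 0) (b := 1) (by intro i; simp) (fun y i => W i (t, y))
    (fun x => ContinuousLinearMap.pi fun i => fderiv ℝ (fun y => W i (t, y)) x) ∅
    Set.countable_empty
    (continuousOn_pi.2 fun i => ((hW i).cont_slice ht).continuousOn)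
    (fun x _ => hasFDerivAt_pi.2 fun i => hfd i x)
  have e : ∀ x i, (ContinuousLinearMap.pi fun i => fderiv ℝ (fun y => W i (t, y)) x)
      (Pi.single i 1) i = Dd (ex i) (W i) (t, x) := by
    intro x i
    exact pd_slice (hW i) ht x i
  simp only [e] at key
  unfold unitBox
  rw [key]
  · refine Finset.sum_eq_zero fun i _ => ?_
    rw [sub_eq_zero]
    congr 1
    funext y
    refine Eq.trans ?_ ((hW i).per (Pi.single i 1) _)
    congr 1
    ext1
    · simp
    · funext j
      refine Fin.succAboveCases i ?_ (fun k => ?_) j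
      · simp
      · simp
  · exact (continuous_finsetSum _ fun i _ =>
      ((hW i).dd _).cont_slice ht).continuousOn.integrableOn_compact isCompact_Icc

end helpers

section pointwise
variable {d : ℕ} {T : ℝ}

lemma pw_conv {R : ℝ × (Fin d → ℝ) → ℝ} {U : Fin d → ℝ × (Fin d → ℝ) → ℝ}
    (hR : SP T R) (hU : ∀ i, SP T (U i)) {p} (hp : p ∈ slab d T) :
    ∑ i, U i p * ∑ j, Dd (ex j) (fun p => R p * U i p * U j p) p
      = (1 / 2) * ∑ j, Dd (ex j) (fun p => (R p * U j p) * ∑ i, U i p * U i p) p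
        + (1 / 2) * (∑ i, U i p * U i p) * ∑ j, Dd (ex j) (fun p => R p * U j p) p := by
  have e1 : ∀ i j, Dd (ex j) (fun p => R p * U i p * U j p) p
      = Dd (ex j) (fun p => R p * U j p) p * U i p + R p * U j p * Dd (ex j) (U i) p := by
    intro i j
    rw [Dd_mul (hR.mul (hU i)) (hU j) hp, Dd_mul hR (hU i) hp, Dd_mul hR (hU j) hp]
    ring
  have e2 : ∀ j, Dd (ex j) (fun p => (R p * U j p) * ∑ i, U i p * U i p) p
      = Dd (ex j) (fun p => R p * U j p) p * (∑ i, U i p * U i p)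
        + R p * U j p * ∑ i, 2 * (U i p * Dd (ex j) (U i) p) := by
    intro j
    rw [Dd_mul (hR.mul (hU j)) (SP.sum _ fun i => (hU i).mul (hU i)) hp,
      Dd_sum _ (fun i => (hU i).mul (hU i)) hp]
    congr 2
    refine Finset.sum_congr rfl fun i _ => ?_
    rw [Dd_mul (hU i) (hU i) hp]; ring
  simp only [e1, e2]
  simp only [Finset.mul_sum]
  rw [Finset.sum_comm, ← Finset.sum_add_distrib]
  refine Finset.sum_congr rfl fun j _ => ?_
  rw [mul_add]
  simp only [Finset.mul_sum, Finset.sum_mul]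
  rw [← Finset.sum_add_distrib, ← Finset.sum_add_distrib]
  refine Finset.sum_congr rfl fun i _ => ?_
  ring

lemma pw_ibp {A : ℝ × (Fin d → ℝ) → ℝ} {U : Fin d → ℝ × (Fin d → ℝ) → ℝ}
    (hA : SP T A) (hU : ∀ i, SP T (U i)) {p} (hp : p ∈ slab d T) :
    ∑ i, U i p * Dd (ex i) A p
      = ∑ i, Dd (ex i) (fun p => U i p * A p) p - A p * ∑ i, Dd (ex i) (U i) p := by
  rw [Finset.mul_sum, ← Finset.sum_sub_distrib]
  refine Finset.sum_congr rfl fun i _ => ?_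
  rw [Dd_mul (hU i) hA hp]; ring

lemma pw_visc {H : ℝ × (Fin d → ℝ) → ℝ} {U : Fin d → ℝ × (Fin d → ℝ) → ℝ}
    {S : Fin d → Fin d → ℝ × (Fin d → ℝ) → ℝ}
    (hH : SP T H) (hU : ∀ i, SP T (U i)) (hS : ∀ i j, SP T (S i j))
    {p} (hp : p ∈ slab d T)
    (hSe : ∀ i j, S i j p = (Dd (ex j) (U i) p + Dd (ex i) (U j) p) / 2) :
    ∑ i, U i p * ∑ j, Dd (ex j) (fun p => H p * S i j p) p
      = ∑ j, Dd (ex j) (fun p => ∑ i, H p * S i j p * U i p) p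
        - H p * ∑ i, ∑ j, S i j p ^ 2 := by
  have e : ∀ j, Dd (ex j) (fun p => ∑ i, H p * S i j p * U i p) p
      = ∑ i, (U i p * Dd (ex j) (fun p => H p * S i j p) p
          + H p * S i j p * Dd (ex j) (U i) p) := by
    intro j
    rw [Dd_sum _ (fun i => (hH.mul (hS i j)).mul (hU i)) hp]
    refine Finset.sum_congr rfl fun i _ => ?_
    rw [Dd_mul (hH.mul (hS i j)) (hU i) hp]; ring
  have key : ∑ i, ∑ j, S i j p * Dd (ex j) (U i) p = ∑ i, ∑ j, S i j p ^ 2 := by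
    have h1 : ∑ i, ∑ j, S i j p * Dd (ex j) (U i) p = ∑ i, ∑ j, S i j p * Dd (ex i) (U j) p := by
      rw [Finset.sum_comm]
      refine Finset.sum_congr rfl fun i _ => Finset.sum_congr rfl fun j _ => ?_
      rw [hSe i j, hSe j i]; ring
    have h2 : ∑ i, ∑ j, S i j p ^ 2 = (1 / 2) * (∑ i, ∑ j, S i j p * Dd (ex j) (U i) p)
        + (1 / 2) * ∑ i, ∑ j, S i j p * Dd (ex i) (U j) p := by
      simp only [Finset.mul_sum, ← Finset.sum_add_distrib]
      refine Finset.sum_congr rfl fun i _ => Finset.sum_congr rfl fun j _ => ?_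
      rw [hSe i j]; ring
    rw [h2, ← h1]; ring
  rw [← key]
  simp only [e, Finset.mul_sum, Finset.sum_add_distrib]
  rw [Finset.sum_comm (f := fun j i => U i p * _),
    Finset.sum_comm (f := fun j i => H p * S i j p * _)]
  simp only [mul_assoc, add_sub_cancel_right]

lemma pw_energy {ν κ : ℝ} {R H G Pi E1 M K pt N dv GD : ℝ × (Fin d → ℝ) → ℝ}
    {U Q W1 W4 W : Fin d → ℝ × (Fin d → ℝ) → ℝ}
    {S : Fin d → Fin d → ℝ × (Fin d → ℝ) → ℝ}
    (hR : SP T R) (hH : SP T H) (hG : SP T G) (hPi : SP T Pi) (hE : SP T E1) (hM : SP T M)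
    (hK : SP T K) (hU : ∀ i, SP T (U i)) (hQ : ∀ i, SP T (Q i)) (hS : ∀ i j, SP T (S i j))
    (hSe : ∀ p ∈ slab d T, ∀ i j, S i j p = (Dd (ex j) (U i) p + Dd (ex i) (U j) p) / 2)
    (hdv : dv = fun p => ∑ i, Dd (ex i) (U i) p)
    (hGD : GD = fun p => G p * dv p)
    (hN : N = fun p => M p * Dd (et d) R p)
    (hQe : ∀ p ∈ slab d T, ∀ i, Q i p = M p * Dd (ex i) R p)
    (hKe : ∀ p ∈ slab d T, K p = 2 * M p * ∑ i, Dd (ex i) (Q i) p)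
    (m1 : ℝ × (Fin d → ℝ) → ℝ) (hm1 : ∀ p ∈ slab d T, ∀ v, Dd v M p = m1 p * Dd v R p)
    (e1 : ℝ × (Fin d → ℝ) → ℝ) (he1 : ∀ p ∈ slab d T, ∀ v, Dd v E1 p = e1 p * Dd v R p)
    (hEP : ∀ p ∈ slab d T, R p * e1 p - E1 p = Pi p)
    (hW1 : W1 = fun j p => (R p * U j p) * ∑ i, U i p * U i p)
    (hW4 : W4 = fun j p => ∑ i, H p * S i j p * U i p)
    (hW : W = fun i p => (-(1 / 2)) * W1 i p + (-1) * (U i p * Pi p) + (-1) * (U i p * E1 p)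
      + (2 * ν) * W4 i p + (2 * ν) * (U i p * GD p) + (2 * κ ^ 2) * ((R p * U i p) * K p)
      + (4 * κ ^ 2) * (Q i p * N p))
    (hcont : ∀ p ∈ slab d T, Dd (et d) R p + ∑ i, Dd (ex i) (fun p => R p * U i p) p = 0)
    (hmom : ∀ p ∈ slab d T, ∀ i, Dd (et d) (fun p => R p * U i p) p
      + ∑ j, Dd (ex j) (fun p => R p * U i p * U j p) p + Dd (ex i) Pi p + pt p * U i p
      = 2 * ν * ∑ j, Dd (ex j) (fun p => H p * S i j p) p + 2 * ν * Dd (ex i) GD p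
        + 2 * κ ^ 2 * R p * Dd (ex i) K p) :
    (∀ i, SP T (W i)) ∧
    SP T (fun p => (1 / 2) * (R p * ∑ i, U i p * U i p) + E1 p
        + (2 * κ ^ 2) * ∑ i, Q i p * Q i p) ∧
    ∀ p ∈ slab d T,
      Dd (et d) (fun p => (1 / 2) * (R p * ∑ i, U i p * U i p) + E1 p
        + (2 * κ ^ 2) * ∑ i, Q i p * Q i p) p
      = ∑ i, Dd (ex i) (W i) p - 2 * ν * (H p * ∑ i, ∑ j, S i j p ^ 2)
        - 2 * ν * (G p * dv p ^ 2) - pt p * ∑ i, U i p ^ 2 := by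
  have sdv : SP T dv := hdv ▸ SP.sum _ fun i => (hU i).dd _
  have sGD : SP T GD := hGD ▸ hG.mul sdv
  have sN : SP T N := hN ▸ hM.mul (hR.dd _)
  have sUU : SP T (fun p => ∑ i, U i p * U i p) := SP.sum _ fun i => (hU i).mul (hU i)
  have sQQ : SP T (fun p => ∑ i, Q i p * Q i p) := SP.sum _ fun i => (hQ i).mul (hQ i)
  have sW1 : ∀ i, SP T (W1 i) := fun i => hW1 ▸ (hR.mul (hU i)).mul sUU
  have sW4 : ∀ i, SP T (W4 i) := fun i =>
    hW4 ▸ SP.sum _ fun j => (hH.mul (hS j i)).mul (hU j)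
  have a1 := fun i => (SP.const (d := d) (T := T) (-(1 / 2))).mul (sW1 i)
  have a2 := fun i => (SP.const (d := d) (T := T) (-1)).mul ((hU i).mul hPi)
  have a3 := fun i => (SP.const (d := d) (T := T) (-1)).mul ((hU i).mul hE)
  have a4 := fun i => (SP.const (d := d) (T := T) (2 * ν)).mul (sW4 i)
  have a5 := fun i => (SP.const (d := d) (T := T) (2 * ν)).mul ((hU i).mul sGD)
  have a6 := fun i => (SP.const (d := d) (T := T) (2 * κ ^ 2)).mul ((hR.mul (hU i)).mul hK)
  have a7 := fun i => (SP.const (d := d) (T := T) (4 * κ ^ 2)).mul ((hQ i).mul sN)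
  have b1 := (SP.const (d := d) (T := T) (1 / 2)).mul (hR.mul sUU)
  have b2 := (SP.const (d := d) (T := T) (2 * κ ^ 2)).mul sQQ
  refine ⟨fun i => ?_, (b1.add hE).add b2, fun p hp => ?_⟩
  · rw [hW]
    exact ((((((a1 i).add (a2 i)).add (a3 i)).add (a4 i)).add (a5 i)).add (a6 i)).add (a7 i)
  have dW : ∑ i, Dd (ex i) (W i) p = (-(1 / 2)) * ∑ i, Dd (ex i) (W1 i) p
      + (-1) * ∑ i, Dd (ex i) (fun p => U i p * Pi p) p
      + (-1) * ∑ i, Dd (ex i) (fun p => U i p * E1 p) p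
      + (2 * ν) * ∑ i, Dd (ex i) (W4 i) p
      + (2 * ν) * ∑ i, Dd (ex i) (fun p => U i p * GD p) p
      + (2 * κ ^ 2) * ∑ i, Dd (ex i) (fun p => (R p * U i p) * K p) p
      + (4 * κ ^ 2) * ∑ i, Dd (ex i) (fun p => Q i p * N p) p := by
    simp only [Finset.mul_sum, ← Finset.sum_add_distrib]
    refine Finset.sum_congr rfl fun i _ => ?_
    rw [hW]
    beta_reduce
    rw [Dd_add ((((((a1 i).add (a2 i)).add (a3 i)).add (a4 i)).add (a5 i)).add (a6 i)) (a7 i) hp,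
      Dd_add (((((a1 i).add (a2 i)).add (a3 i)).add (a4 i)).add (a5 i)) (a6 i) hp,
      Dd_add ((((a1 i).add (a2 i)).add (a3 i)).add (a4 i)) (a5 i) hp,
      Dd_add (((a1 i).add (a2 i)).add (a3 i)) (a4 i) hp,
      Dd_add ((a1 i).add (a2 i)) (a3 i) hp,
      Dd_add (a1 i) (a2 i) hp,
      Dd_cmul _ (sW1 i) hp, Dd_cmul _ ((hU i).mul hPi) hp, Dd_cmul _ ((hU i).mul hE) hp,
      Dd_cmul _ (sW4 i) hp, Dd_cmul _ ((hU i).mul sGD) hp,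
      Dd_cmul _ ((hR.mul (hU i)).mul hK) hp, Dd_cmul _ ((hQ i).mul sN) hp]
  have dK : Dd (et d) (fun p => R p * ∑ i, U i p * U i p) p
      = 2 * ∑ i, U i p * Dd (et d) (fun p => R p * U i p) p
        - (∑ i, U i p * U i p) * Dd (et d) R p := by
    rw [Dd_mul hR sUU hp, Dd_sum _ (fun i => (hU i).mul (hU i)) hp]
    simp only [Finset.mul_sum, Finset.sum_mul, ← Finset.sum_add_distrib, ← Finset.sum_sub_distrib]
    refine Finset.sum_congr rfl fun i _ => ?_
    rw [Dd_mul (hU i) (hU i) hp, Dd_mul hR (hU i) hp]; ring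
  have dQ : Dd (et d) (fun p => ∑ i, Q i p * Q i p) p
      = 2 * ∑ i, Dd (ex i) (fun p => Q i p * N p) p - 2 * (∑ i, Dd (ex i) (Q i) p) * N p := by
    rw [Dd_sum _ (fun i => (hQ i).mul (hQ i)) hp]
    simp only [Finset.mul_sum, Finset.sum_mul, ← Finset.sum_sub_distrib]
    refine Finset.sum_congr rfl fun i _ => ?_
    have e : Dd (et d) (Q i) p = Dd (ex i) N p := by
      rw [Dd_congr (fun q hq => hQe q hq i) hp, hN, Dd_mul hM (hR.dd _) hp,
        Dd_mul hM (hR.dd _) hp, Dd_comm hR hp, hm1 p hp, hm1 p hp]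
      ring
    rw [Dd_mul (hQ i) (hQ i) hp, Dd_mul (hQ i) sN hp, e]; ring
  have c2 := pw_conv hR hU hp
  have c3 := pw_ibp hPi hU hp
  have c4 := pw_visc hH hU hS hp (hSe p hp)
  have c5 := pw_ibp sGD hU hp
  have c6 := pw_ibp hK (fun i => hR.mul (hU i)) hp
  have c8 : Dd (et d) E1 p = -(∑ i, Dd (ex i) (fun p => U i p * E1 p) p) - Pi p * dv p := by
    have hx : ∑ i, Dd (ex i) (fun p => U i p * E1 p) p
        = e1 p * (∑ i, Dd (ex i) (fun p => R p * U i p) p)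
          - (R p * e1 p - E1 p) * ∑ i, Dd (ex i) (U i) p := by
      simp only [Finset.mul_sum, ← Finset.sum_sub_distrib]
      refine Finset.sum_congr rfl fun i _ => ?_
      rw [Dd_mul (hU i) hE hp, Dd_mul hR (hU i) hp, he1 p hp]; ring
    rw [hx, he1 p hp, hEP p hp, hdv]
    linear_combination e1 p * hcont p hp
  have hsum : ∑ i, U i p * Dd (et d) (fun p => R p * U i p) p
      + ∑ i, U i p * ∑ j, Dd (ex j) (fun p => R p * U i p * U j p) p
      + ∑ i, U i p * Dd (ex i) Pi p + pt p * ∑ i, U i p ^ 2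
      = 2 * ν * ∑ i, U i p * ∑ j, Dd (ex j) (fun p => H p * S i j p) p
        + 2 * ν * ∑ i, U i p * Dd (ex i) GD p
        + 2 * κ ^ 2 * ∑ i, (R p * U i p) * Dd (ex i) K p := by
    rw [Finset.mul_sum (a := pt p), Finset.mul_sum (a := 2 * ν), Finset.mul_sum (a := 2 * ν),
      Finset.mul_sum (a := 2 * κ ^ 2)]
    simp only [← Finset.sum_add_distrib]
    refine Finset.sum_congr rfl fun i _ => ?_
    linear_combination U i p * hmom p hp i
  rw [Dd_add (b1.add hE) b2 hp, Dd_add b1 hE hp, Dd_cmul _ (hR.mul sUU) hp, Dd_cmul _ sQQ hp,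
    dK, dQ, dW, c8]
  have hdp : ∑ i, Dd (ex i) (U i) p = dv p := by rw [hdv]
  have hGp : GD p = G p * dv p := by rw [hGD]
  have hNp : N p = M p * Dd (et d) R p := by rw [hN]
  rw [hdp] at c3 c5
  rw [hGp] at c5
  rw [hNp]
  have w1 : ∀ i, Dd (ex i) (fun p => (R p * U i p) * ∑ i, U i p * U i p) p = Dd (ex i) (W1 i) p := by
    intro i; rw [hW1]
  have w4 : ∀ i, Dd (ex i) (fun p => ∑ j, H p * S j i p * U j p) p = Dd (ex i) (W4 i) p := by
    intro i; rw [hW4]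
  simp only [w1] at c2
  simp only [w4] at c4
  linear_combination hsum - c2 - c3 + 2 * ν * c4 + 2 * ν * c5 + 2 * κ ^ 2 * c6 - (1 / 2) * (∑ i, U i p * U i p) * hcont p hp - 2 * κ ^ 2 * K p * hcont p hp + 2 * κ ^ 2 * Dd (et d) R p * hKe p hp
end pointwise

section smoothness

lemma smooth_of_hasDerivAt {P P' : ℝ → ℝ} (h : ∀ r : ℝ, 0 < r → HasDerivAt P (P' r) r)
    (hs : ContDiffOn ℝ (⊤ : ℕ∞) P' (Set.Ioi 0)) : ContDiffOn ℝ (⊤ : ℕ∞) P (Set.Ioi 0) := by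
  rw [contDiffOn_infty_iff_deriv_of_isOpen isOpen_Ioi]
  exact ⟨fun r hr => (h r hr).differentiableAt.differentiableWithinAt,
    hs.congr fun r hr => (h r hr).deriv⟩

lemma rpow_smooth (a : ℝ) : ContDiffOn ℝ (⊤ : ℕ∞) (fun r : ℝ => r ^ a) (Set.Ioi 0) :=
  fun _ hr => (contDiffAt_rpow_const_of_ne (ne_of_gt hr)).contDiffWithinAt

lemma sqrt_smooth : ContDiffOn ℝ (⊤ : ℕ∞) (fun r : ℝ => √r) (Set.Ioi 0) :=
  fun _ hr => (Real.contDiffAt_sqrt (ne_of_gt hr)).contDiffWithinAt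

lemma hfun_smooth (ε γ : ℝ) : ContDiffOn ℝ (⊤ : ℕ∞) (hfun ε γ) (Set.Ioi 0) :=
  (contDiffOn_id.add (contDiffOn_const.mul (rpow_smooth _))).add
    (contDiffOn_const.mul (rpow_smooth _))

lemma hfun1_smooth (ε γ : ℝ) : ContDiffOn ℝ (⊤ : ℕ∞) (deriv (hfun ε γ)) (Set.Ioi 0) :=
  (hfun_smooth ε γ).deriv_of_isOpen isOpen_Ioi (by simp)

lemma gfun_smooth (ε γ : ℝ) : ContDiffOn ℝ (⊤ : ℕ∞) (gfun ε γ) (Set.Ioi 0) :=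
  (contDiffOn_id.mul (hfun1_smooth ε γ)).sub (hfun_smooth ε γ)

lemma ptil_smooth (ε : ℝ) : ContDiffOn ℝ (⊤ : ℕ∞) (ptil ε) (Set.Ioi 0) :=
  contDiffOn_const.mul ((rpow_smooth _).add (rpow_smooth _))

lemma peps_smooth {ε γ ν κ : ℝ} {P : ℝ → ℝ} (hP : IsPeps ε γ ν κ P) :
    ContDiffOn ℝ (⊤ : ℕ∞) P (Set.Ioi 0) :=
  smooth_of_hasDerivAt hP (((contDiffOn_const.mul (ptil_smooth ε)).mul (hfun1_smooth ε γ)).div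
    contDiffOn_id fun _ hr => ne_of_gt hr)

lemma feps_smooth {P F : ℝ → ℝ} (hP : ContDiffOn ℝ (⊤ : ℕ∞) P (Set.Ioi 0)) (hF : IsFeps P F) :
    ContDiffOn ℝ (⊤ : ℕ∞) F (Set.Ioi 0) := by
  have h1 : ContDiffOn ℝ (⊤ : ℕ∞) (fun r => F r / r) (Set.Ioi 0) := by
    refine smooth_of_hasDerivAt (P' := fun r => P r / r ^ 2) (fun r hr => ?_)
      (hP.div (contDiffOn_id.pow 2) fun r hr => pow_ne_zero 2 (ne_of_gt hr))
    have := (hF.1 r hr).hasDerivAt.div (hasDerivAt_id r) hr.ne'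
    have e : P r / r ^ 2 = (deriv F r * r - F r * 1) / r ^ 2 := by
      rw [← hF.2 r hr]; ring
    beta_reduce
    rw [e]
    exact this
  refine (h1.mul contDiffOn_id).congr fun r hr => ?_
  have : r ≠ 0 := ne_of_gt hr
  simp only [id]
  field_simp

lemma integral_sub4 {α : Type*} [MeasurableSpace α] {μ : Measure α} {a b c e : α → ℝ}
    (ha : Integrable a μ) (hb : Integrable b μ) (hc : Integrable c μ) (he : Integrable e μ) :
    ∫ x, (a x - b x - c x - e x) ∂μ
      = (∫ x, a x ∂μ) - (∫ x, b x ∂μ) - (∫ x, c x ∂μ) - ∫ x, e x ∂μ := by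
  have h1 : Integrable (fun x => a x - b x) μ := ha.sub hb
  have h2 : Integrable (fun x => a x - b x - c x) μ := h1.sub hc
  rw [integral_sub h2 he, integral_sub h1 hc, integral_sub ha hb]

end smoothness

theorem statement8 (d : ℕ) (hd : 1 ≤ d) (ε γ ν κ T : ℝ)
    (hε : 0 < ε) (hγ : 1 < γ) (hκ : 0 < κ) (hνκ : κ < ν) (hT : 0 < T)
    (P F : ℝ → ℝ) (hP : IsPeps ε γ ν κ P) (hF : IsFeps P F)
    (ρ : ℝ → (Fin d → ℝ) → ℝ) (u : ℝ → (Fin d → ℝ) → (Fin d → ℝ))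
    (hsol : IsQNSSol d ε γ ν κ T P ρ u) :
    ∀ t ∈ Set.Ioo 0 T,
      HasDerivAt (fun s => ∫ x in unitBox d,
          (ρ s x * (∑ i, u s x i ^ 2) / 2 + ρ s x ^ γ / (γ - 1) + F (ρ s x)
            + 2 * κ ^ 2 *
              ∑ i, (deriv (hfun ε γ) (ρ s x) * grad (fun z => Real.sqrt (ρ s z)) x i) ^ 2))
        (-(2 * ν * ∫ x in unitBox d, hfun ε γ (ρ t x) * ∑ i, ∑ j, symD (u t) x i j ^ 2)
          - 2 * ν * (∫ x in unitBox d, gfun ε γ (ρ t x) * dvg (u t) x ^ 2)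
          - ∫ x in unitBox d, ptil ε (ρ t x) * ∑ i, u t x i ^ 2) t := by
  intro t ht
  obtain ⟨hρs, hus, hpos, hρp, hup, hcont, hmom⟩ := hsol
  have hsub : slab d T ⊆ Set.Icc 0 T ×ˢ Set.univ :=
    Set.prod_mono Set.Ioo_subset_Icc_self subset_rfl
  set h1 := deriv (hfun ε γ) with hh1
  let R : ℝ × (Fin d → ℝ) → ℝ := fun p => ρ p.1 p.2
  let U : Fin d → ℝ × (Fin d → ℝ) → ℝ := fun i p => u p.1 p.2 i
  have hRpos : ∀ p, 0 < R p := fun p => hpos _ _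
  have hR : SP T R := ⟨hρs.mono hsub, fun n p => by
    simpa [R] using hρp p.1 p.2 n⟩
  have hU : ∀ i, SP T (U i) := fun i => ⟨contDiffOn_pi.1 (hus.mono hsub) i, fun n p => by
    simpa [U] using congrFun (hup p.1 p.2 n) i⟩
  have sh1 : ContDiffOn ℝ (⊤ : ℕ∞) h1 (Set.Ioi 0) := hfun1_smooth ε γ
  have sP := peps_smooth hP
  have sF := feps_smooth sP hF
  have sqne : ∀ r ∈ Set.Ioi (0 : ℝ), √r ≠ 0 := fun r hr => (Real.sqrt_pos.2 hr).ne'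
  let m : ℝ → ℝ := fun r => h1 r / (2 * √r)
  have sm : ContDiffOn ℝ (⊤ : ℕ∞) m (Set.Ioi 0) :=
    sh1.div (contDiffOn_const.mul sqrt_smooth) fun r hr => mul_ne_zero two_ne_zero (sqne r hr)
  let e0 : ℝ → ℝ := fun r => r ^ γ / (γ - 1) + F r
  have se0 : ContDiffOn ℝ (⊤ : ℕ∞) e0 (Set.Ioi 0) := ((rpow_smooth γ).div_const _).add sF
  let Sq : ℝ × (Fin d → ℝ) → ℝ := fun p => √(R p)
  have hSq : SP T Sq := SP.comp sqrt_smooth hR hRpos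
  have hH1 : SP T (fun p => h1 (R p)) := SP.comp sh1 hR hRpos
  let Q : Fin d → ℝ × (Fin d → ℝ) → ℝ := fun i p => h1 (R p) * Dd (ex i) Sq p
  have hQ : ∀ i, SP T (Q i) := fun i => hH1.mul (hSq.dd _)
  let K : ℝ × (Fin d → ℝ) → ℝ := fun p => h1 (R p) * (∑ i, Dd (ex i) (Q i) p) / √(R p)
  have hK : SP T K := by
    have := (SP.comp (φ := fun r => h1 r / √r) (sh1.div sqrt_smooth sqne) hR hRpos).mul
      (SP.sum Finset.univ fun i => (hQ i).dd (ex i))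
    convert this using 1
    funext p
    simp only [K]
    ring
  let S : Fin d → Fin d → ℝ × (Fin d → ℝ) → ℝ := fun i j p =>
    (Dd (ex j) (U i) p + Dd (ex i) (U j) p) / 2
  have hS : ∀ i j, SP T (S i j) := fun i j => by
    have := (SP.const (d := d) (T := T) (1 / 2)).mul (((hU i).dd (ex j)).add ((hU j).dd (ex i)))
    convert this using 1
    funext p
    simp only [S]
    ring
  have hH : SP T (fun p => hfun ε γ (R p)) := SP.comp (hfun_smooth ε γ) hR hRpos
  have hG : SP T (fun p => gfun ε γ (R p)) := SP.comp (gfun_smooth ε γ) hR hRpos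
  have hpt : SP T (fun p => ptil ε (R p)) := SP.comp (ptil_smooth ε) hR hRpos
  have hPi : SP T (fun p => R p ^ γ + P (R p)) :=
    SP.comp (φ := fun r => r ^ γ + P r) ((rpow_smooth γ).add sP) hR hRpos
  have hE : SP T (fun p => e0 (R p)) := SP.comp se0 hR hRpos
  have hM : SP T (fun p => m (R p)) := SP.comp sm hR hRpos
  have dAt : ∀ {φ : ℝ → ℝ}, ContDiffOn ℝ (⊤ : ℕ∞) φ (Set.Ioi 0) → ∀ r, 0 < r →
      DifferentiableAt ℝ φ r := fun h r hr =>
    (h.contDiffAt (isOpen_Ioi.mem_nhds hr)).differentiableAt (by simp)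
  let dv : ℝ × (Fin d → ℝ) → ℝ := fun p => ∑ i, Dd (ex i) (U i) p
  have hdv : SP T dv := SP.sum _ fun i => (hU i).dd _
  have hGD : SP T (fun p => gfun ε γ (R p) * dv p) := hG.mul hdv
  -- translation of the differential expressions in the statement
  have trSym : ∀ s ∈ Set.Ioo 0 T, ∀ x i j, symD (u s) x i j = S i j (s, x) := by
    intro s hs x i j
    have a := pd_slice (hU i) hs x j
    have b := pd_slice (hU j) hs x i
    simp only [symD, jac, S, ← a, ← b]
    rfl
  have trDiv : ∀ s ∈ Set.Ioo 0 T, ∀ x, dvg (u s) x = dv (s, x) := by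
    intro s hs x
    exact Finset.sum_congr rfl fun i _ => pd_slice (hU i) hs x i
  have trQ : ∀ s ∈ Set.Ioo 0 T, ∀ x i,
      h1 (ρ s x) * grad (fun z => √(ρ s z)) x i = Q i (s, x) := by
    intro s hs x i
    have a := pd_slice hSq hs x i
    simp only [Q, ← a]
    rfl
  have trK : ∀ s ∈ Set.Ioo 0 T, ∀ x i, Kvec ε γ (ρ s) x i = Dd (ex i) K (s, x) := by
    intro s hs x i
    rw [← pd_slice hK hs x i]
    unfold Kvec
    change pd i _ x = _
    congr 1
    funext y
    simp only [K]
    congr 2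
    refine Finset.sum_congr rfl fun j _ => ?_
    rw [← pd_slice (hQ j) hs y j]
    congr 1
    funext z
    rw [← trQ s hs z j]
    rfl
  obtain ⟨hW, hEn, hpw⟩ := pw_energy (ν := ν) (κ := κ) (pt := fun p => ptil ε (R p)) (S := S)
    hR hH hG hPi hE hM hK hU hQ hS (fun p _ i j => rfl) (dv := dv) rfl rfl rfl
    (by
      intro p hp i
      simp only [Q, m, Sq]
      rw [Dd_comp (φ := fun r => √r) hR hp (dAt sqrt_smooth _ (hRpos p)),
        (Real.hasDerivAt_sqrt (hRpos p).ne').deriv]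
      ring)
    (by
      intro p hp
      simp only [K, m]
      have := sqne (R p) (hRpos p)
      field_simp)
    (fun p => deriv m (R p)) (fun p hp v => Dd_comp hR hp (dAt sm _ (hRpos p)) v)
    (fun p => deriv e0 (R p)) (fun p hp v => Dd_comp hR hp (dAt se0 _ (hRpos p)) v)
    (by
      intro p hp
      have hr := hRpos p
      have hd1 : HasDerivAt e0 (γ * R p ^ (γ - 1) / (γ - 1) + deriv F (R p)) (R p) :=
        ((Real.hasDerivAt_rpow_const (Or.inl hr.ne')).div_const _).add (hF.1 _ hr).hasDerivAt
      beta_reduce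
      rw [hd1.deriv, ← hF.2 _ hr, Real.rpow_sub_one hr.ne']
      simp only [e0]
      have : γ - 1 ≠ 0 := by linarith
      field_simp
      ring)
    rfl rfl rfl
    (by
      rintro ⟨s, x⟩ ⟨hs, -⟩
      have := hcont s hs x
      rw [show deriv (fun s => ρ s x) s = Dd (et d) R (s, x) from
        (hasDerivAt_slice hR hs x).deriv] at this
      rw [← this]
      congr 1
      exact Finset.sum_congr rfl fun i _ => (pd_slice (hR.mul (hU i)) hs x i).symm)
    (by
      rintro ⟨s, x⟩ ⟨hs, -⟩ i
      have := hmom s hs x i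
      rw [trK s hs x i, show deriv (fun s => ρ s x * u s x i) s
        = Dd (et d) (fun p => R p * U i p) (s, x) from
        (hasDerivAt_slice (hR.mul (hU i)) hs x).deriv] at this
      simp only [trSym s hs, trDiv s hs] at this
      simp only [dvgM, grad] at this
      rw [← pd_slice hPi hs x i, ← pd_slice hGD hs x i]
      simp only [← pd_slice ((hR.mul (hU i)).mul (hU _)) hs x _,
        ← pd_slice (hH.mul (hS i _)) hs x _]
      exact this)
  have hder := hasDerivAt_int hEn ht
  have hval : ∫ x in unitBox d, Dd (et d) (fun p => (1 / 2) * (R p * ∑ i, U i p * U i p)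
        + e0 (R p) + (2 * κ ^ 2) * ∑ i, Q i p * Q i p) (t, x)
      = (-(2 * ν * ∫ x in unitBox d, hfun ε γ (ρ t x) * ∑ i, ∑ j, symD (u t) x i j ^ 2)
          - 2 * ν * (∫ x in unitBox d, gfun ε γ (ρ t x) * dvg (u t) x ^ 2)
          - ∫ x in unitBox d, ptil ε (ρ t x) * ∑ i, u t x i ^ 2) := by
    have i0 := (SP.sum Finset.univ fun i => (hW i).dd (ex i)).integrableOn ht
    have sS : SP T (fun p => hfun ε γ (R p) * ∑ i, ∑ j, S i j p ^ 2) := by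
      simp only [pow_two]
      exact hH.mul (SP.sum _ fun i => SP.sum _ fun j => (hS i j).mul (hS i j))
    have sG : SP T (fun p => gfun ε γ (R p) * dv p ^ 2) := by
      simp only [pow_two]
      exact hG.mul (hdv.mul hdv)
    have sp : SP T (fun p => ptil ε (R p) * ∑ i, U i p ^ 2) := by
      simp only [pow_two]
      exact hpt.mul (SP.sum _ fun i => (hU i).mul (hU i))
    have i1 := (sS.integrableOn ht).const_mul (2 * ν)
    have i2 := (sG.integrableOn ht).const_mul (2 * ν)
    have i3 := sp.integrableOn ht
    simp only [trSym t ht, trDiv t ht]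
    rw [integral_congr_ae (Filter.Eventually.of_forall fun x => hpw (t, x) ⟨ht, trivial⟩)]
    rw [integral_sub4 i0 i1 i2 i3, integral_div_zero hd hW ht, integral_const_mul, integral_const_mul]
    simp only [R, U]
    ring
  rw [hval] at hder
  refine hder.congr_of_eventuallyEq ?_
  filter_upwards [isOpen_Ioo.mem_nhds ht] with s hs
  refine integral_congr_ae (Filter.Eventually.of_forall fun x => ?_)
  simp only [trQ s hs]
  simp only [R, U, e0, pow_two]
  ring

end
end

section
/- Let d ≥ 1, C₀ > 0, c₀ > 0, and let h : (0,∞) → ℝ be smooth with h ≥ 0, h'(ρ) ≥ c₀, ρ h'(ρ) ≤ C₀ h(ρ) and ρ |h''(ρ)| ≤ C₀ h'(ρ) for all ρ > 0; let φ be smooth on (0,∞) with ρ φ'(ρ) = h'(ρ). Then there is a constant C, depending only on d, C₀ and c₀, such that every smooth ρ : T^d → (0,∞) satisfies ∫_{T^d} |∇²√ρ|² dx + ∫_{T^d} |∇(ρ^{1/4})|⁴ dx ≤ C ∫_{T^d} h(ρ) |∇²(φ(ρ))|² dx. -/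
open MeasureTheory Real

noncomputable section

lemma pd_contDiff {d : ℕ} (i : Fin d) {f : (Fin d → ℝ) → ℝ} (hf : ContDiff ℝ (⊤ : ℕ∞) f) :
    ContDiff ℝ (⊤ : ℕ∞) (pd i f) := by
  unfold pd
  have h1 : ContDiff ℝ (⊤ : ℕ∞) (fderiv ℝ f) := hf.fderiv_right (by simp)
  exact h1.clm_apply contDiff_const

lemma pd_periodic {d : ℕ} (i : Fin d) {f : (Fin d → ℝ) → ℝ} (hf : SpacePeriodic f) :
    SpacePeriodic (pd i f) := by
  intro x n
  unfold pd
  rw [← fderiv_comp_add_right]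
  congr 2
  funext y
  exact hf y n

lemma pd_mul {d : ℕ} (i : Fin d) {f g : (Fin d → ℝ) → ℝ} {x : Fin d → ℝ}
    (hf : DifferentiableAt ℝ f x) (hg : DifferentiableAt ℝ g x) :
    pd i (fun y => f y * g y) x = pd i f x * g x + f x * pd i g x := by
  unfold pd
  have := (hf.hasFDerivAt.mul hg.hasFDerivAt).fderiv
  have h2 : fderiv ℝ (fun y => f y * g y) x = f x • fderiv ℝ g x + g x • fderiv ℝ f x := this
  rw [h2]
  simp
  ring

lemma pd_sum {d : ℕ} (i : Fin d) {f : Fin d → (Fin d → ℝ) → ℝ} {x : Fin d → ℝ}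
    (hf : ∀ j, DifferentiableAt ℝ (f j) x) :
    pd i (fun y => ∑ j, f j y) x = ∑ j, pd i (f j) x := by
  unfold pd
  rw [fderiv_fun_sum (fun j _ => hf j)]
  simp

lemma pd_comp {d : ℕ} (i : Fin d) {g : ℝ → ℝ} {g' : ℝ} {f : (Fin d → ℝ) → ℝ} {x : Fin d → ℝ}
    (hg : HasDerivAt g g' (f x)) (hf : DifferentiableAt ℝ f x) :
    pd i (fun y => g (f y)) x = g' * pd i f x := by
  unfold pd
  have h2 : fderiv ℝ (fun y => g (f y)) x = g' • fderiv ℝ f x :=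
    (hg.comp_hasFDerivAt x hf.hasFDerivAt).fderiv
  rw [h2]
  simp

lemma integral_dvg_zero {n : ℕ} (V : Fin (n + 1) → (Fin (n + 1) → ℝ) → ℝ)
    (hV : ∀ i, ContDiff ℝ (⊤ : ℕ∞) (V i)) (hp : ∀ i, SpacePeriodic (V i)) :
    ∫ x in unitBox (n + 1), ∑ i, pd i (V i) x = 0 := by
  have hcont : Continuous (fun x => ∑ i, pd i (V i) x) :=
    continuous_finsetSum _ fun i _ => (pd_contDiff i (hV i)).continuous
  have key := integral_divergence_of_hasFDerivAt_off_countable' (0 : Fin (n + 1) → ℝ) 1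
    (fun _ => zero_le_one) V (fun i x => fderiv ℝ (V i) x) ∅ Set.countable_empty
    (fun i => (hV i).continuous.continuousOn)
    (fun x _ i => ((hV i).differentiable (by simp) x).hasFDerivAt)
    (hcont.continuousOn.integrableOn_compact isCompact_Icc)
  unfold unitBox pd
  rw [key]
  refine Finset.sum_eq_zero fun i _ => ?_
  rw [sub_eq_zero]
  congr 1
  funext x
  have := hp i (i.insertNth (0 : ℝ) x) (Pi.single i 1)
  show V i (i.insertNth (1 : ℝ) x) = V i (i.insertNth (0 : ℝ) x)
  rw [← this]
  congr 1
  funext j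
  refine Fin.succAboveCases i ?_ (fun k => ?_) j
  · simp
  · simp

lemma alg_div {d : ℕ} (hd : 1 ≤ d) (r p : ℝ) (hr : 0 < r) (hp : 0 < p) (a : Fin d → ℝ)
    (H : Fin d → Fin d → ℝ) (S : ℝ) (hS : S = ∑ i, a i ^ 2) :
    r / p * S ^ 2 ≤ 2 * (∑ i, ((r / p * a i) * S * a i + r * (∑ j, 2 * a j * H i j) * a i
        + r * S * H i i)) + 2 * (4 + d) * (r * p) * ∑ i, ∑ j, H i j ^ 2 := by
  have hd0 : (0 : ℝ) < d := by exact_mod_cast hd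
  have e1 : ∑ i, (r / p * a i) * S * a i = r / p * S ^ 2 := by
    rw [pow_two]
    nth_rewrite 3 [hS]
    rw [← mul_assoc, Finset.mul_sum]
    exact Finset.sum_congr rfl fun i _ => by ring
  have e2 : -(1 / 4 * (r / p * S ^ 2)) - 4 * (r * p) * ∑ i, ∑ j, H i j ^ 2
      ≤ ∑ i, r * (∑ j, 2 * a j * H i j) * a i := by
    have : -(1 / 4 * (r / p * S ^ 2)) - 4 * (r * p) * ∑ i, ∑ j, H i j ^ 2
      = ∑ i, ∑ j, (-(1 / 4 * (r / p * (a i ^ 2 * a j ^ 2))) - 4 * (r * p) * H i j ^ 2) := by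
      simp only [Finset.sum_sub_distrib, Finset.sum_neg_distrib, ← Finset.mul_sum]
      rw [pow_two S, hS, ← Finset.sum_mul]
    rw [this]
    refine Finset.sum_le_sum fun i _ => ?_
    rw [Finset.mul_sum, Finset.sum_mul]
    refine Finset.sum_le_sum fun j _ => ?_
    have : 0 ≤ r / p * (1 / 2 * (a i * a j) + 2 * p * H i j) ^ 2 := by positivity
    have e : r / p * (1 / 2 * (a i * a j) + 2 * p * H i j) ^ 2 =
      1 / 4 * (r / p * (a i ^ 2 * a j ^ 2)) + 4 * (r * p) * H i j ^ 2
        + r * (2 * a j * H i j) * a i := by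
      field_simp
      ring
    linarith
  have e3 : -(1 / 4 * (r / p * S ^ 2)) - d * (r * p) * ∑ i, ∑ j, H i j ^ 2
      ≤ ∑ i, r * S * H i i := by
    have h1 : ∑ i, H i i ^ 2 ≤ ∑ i, ∑ j, H i j ^ 2 :=
      Finset.sum_le_sum fun i _ => Finset.single_le_sum (f := fun j => H i j ^ 2)
        (fun j _ => sq_nonneg _) (Finset.mem_univ i)
    have h2 : ∑ i : Fin d, (-(1 / (4 * d) * (r / p * S ^ 2)) - d * (r * p) * H i i ^ 2)
        ≤ ∑ i, r * S * H i i := by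
      refine Finset.sum_le_sum fun i _ => ?_
      have : 0 ≤ r / p / (4 * d) * (S + 2 * d * p * H i i) ^ 2 := by positivity
      have e : r / p / (4 * d) * (S + 2 * d * p * H i i) ^ 2 =
        1 / (4 * d) * (r / p * S ^ 2) + d * (r * p) * H i i ^ 2 + r * S * H i i := by
        field_simp
        ring
      linarith
    have h3 : ∑ i : Fin d, (-(1 / (4 * d) * (r / p * S ^ 2)) - d * (r * p) * H i i ^ 2)
      = -(1 / 4 * (r / p * S ^ 2)) - d * (r * p) * ∑ i, H i i ^ 2 := by
      rw [Finset.sum_sub_distrib, ← Finset.mul_sum]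
      simp
      field_simp
    have h4 : d * (r * p) * ∑ i, H i i ^ 2 ≤ d * (r * p) * ∑ i, ∑ j, H i j ^ 2 :=
      mul_le_mul_of_nonneg_left h1 (by positivity)
    linarith
  rw [Finset.sum_add_distrib, Finset.sum_add_distrib, e1]
  linarith

lemma alg_hess {d : ℕ} (r p k C₀ c₀ hh : ℝ) (hr : 0 < r) (hc : 0 < c₀) (hp : c₀ ≤ p)
    (hC : 0 < C₀) (hk : r * |k| ≤ C₀ * p) (hrp : r * p ≤ C₀ * hh) (a : Fin d → ℝ)
    (H : Fin d → Fin d → ℝ) (S : ℝ) (hS : S = ∑ i, a i ^ 2) :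
    (∑ i, ∑ j, (√r / (2 * p) * H i j + (1 / 4 - r * k / (2 * p)) * (√r / p ^ 2)
        * (a i * a j)) ^ 2) + (∑ i, (1 / 4 * r ^ ((1 : ℝ) / 4) / p * a i) ^ 2) ^ 2
      ≤ C₀ / (2 * c₀ ^ 3) * (hh * ∑ i, ∑ j, H i j ^ 2)
        + (2 * (1 / 4 + C₀ / 2) ^ 2 + 1) / c₀ ^ 3 * (r / p * S ^ 2) := by
  have hp0 : 0 < p := lt_of_lt_of_le hc hp
  have hsq : √r ^ 2 = r := Real.sq_sqrt hr.le
  have hHn : 0 ≤ ∑ i, ∑ j, H i j ^ 2 :=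
    Finset.sum_nonneg fun i _ => Finset.sum_nonneg fun j _ => sq_nonneg _
  have hp3 : c₀ ^ 3 ≤ p ^ 3 := by gcongr
  have hth : (1 / 4 - r * k / (2 * p)) ^ 2 ≤ (1 / 4 + C₀ / 2) ^ 2 := by
    have h1 : |r * k / (2 * p)| ≤ C₀ / 2 := by
      rw [abs_div, abs_mul, abs_of_pos hr, abs_of_pos (by positivity : 0 < 2 * p),
        div_le_div_iff₀ (by positivity) (by positivity)]
      linarith
    obtain ⟨h2, h3⟩ := abs_le.1 h1
    apply sq_le_sq'
    · linarith
    · linarith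
  have hq : r / p ^ 4 * S ^ 2 ≤ 1 / c₀ ^ 3 * (r / p * S ^ 2) := by
    have : r / p ^ 4 * S ^ 2 = 1 / p ^ 3 * (r / p * S ^ 2) := by field_simp
    rw [this]
    gcongr
  have hq2 : r / (2 * p ^ 2) * (∑ i, ∑ j, H i j ^ 2)
      ≤ C₀ / (2 * c₀ ^ 3) * (hh * ∑ i, ∑ j, H i j ^ 2) := by
    rw [← mul_assoc]
    refine mul_le_mul_of_nonneg_right ?_ hHn
    have hhh : 0 ≤ C₀ * hh := le_trans (by positivity) hrp
    calc r / (2 * p ^ 2) = (r * p) / (2 * p ^ 3) := by field_simp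
      _ ≤ (C₀ * hh) / (2 * c₀ ^ 3) := by gcongr
      _ = _ := by ring
  have b1 : (∑ i, ∑ j, (√r / (2 * p) * H i j + (1 / 4 - r * k / (2 * p)) * (√r / p ^ 2)
        * (a i * a j)) ^ 2) ≤ r / (2 * p ^ 2) * (∑ i, ∑ j, H i j ^ 2)
          + 2 * (1 / 4 + C₀ / 2) ^ 2 * (r / p ^ 4 * S ^ 2) := by
    have : r / (2 * p ^ 2) * (∑ i, ∑ j, H i j ^ 2)
          + 2 * (1 / 4 + C₀ / 2) ^ 2 * (r / p ^ 4 * S ^ 2)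
        = ∑ i, ∑ j, (r / (2 * p ^ 2) * H i j ^ 2
          + 2 * (1 / 4 + C₀ / 2) ^ 2 * (r / p ^ 4 * (a i ^ 2 * a j ^ 2))) := by
      simp only [Finset.sum_add_distrib, ← Finset.mul_sum]
      rw [pow_two S, hS, ← Finset.sum_mul]
    rw [this]
    refine Finset.sum_le_sum fun i _ => Finset.sum_le_sum fun j _ => ?_
    have h1 : (√r / (2 * p) * H i j) ^ 2 = r / (4 * p ^ 2) * H i j ^ 2 := by
      rw [mul_pow, div_pow, hsq]; ring
    have h2 : ((1 / 4 - r * k / (2 * p)) * (√r / p ^ 2) * (a i * a j)) ^ 2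
        ≤ (1 / 4 + C₀ / 2) ^ 2 * (r / p ^ 4 * (a i ^ 2 * a j ^ 2)) := by
      have : ((1 / 4 - r * k / (2 * p)) * (√r / p ^ 2) * (a i * a j)) ^ 2
        = (1 / 4 - r * k / (2 * p)) ^ 2 * (r / p ^ 4 * (a i ^ 2 * a j ^ 2)) := by
        rw [mul_pow, mul_pow, div_pow, hsq]; ring
      rw [this]
      gcongr
    have h3 := add_sq_le (a := √r / (2 * p) * H i j)
      (b := (1 / 4 - r * k / (2 * p)) * (√r / p ^ 2) * (a i * a j))
    rw [h1] at h3
    have h4 : r / (2 * p ^ 2) * H i j ^ 2 = 2 * (r / (4 * p ^ 2) * H i j ^ 2) := by ring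
    linarith
  have b2 : (∑ i, (1 / 4 * r ^ ((1 : ℝ) / 4) / p * a i) ^ 2) ^ 2 ≤ r / p ^ 4 * S ^ 2 := by
    have h4 : (r ^ ((1 : ℝ) / 4)) ^ 4 = r := by
      rw [← Real.rpow_natCast, ← Real.rpow_mul hr.le]; norm_num
    have : (∑ i, (1 / 4 * r ^ ((1 : ℝ) / 4) / p * a i) ^ 2)
        = (1 / 4 * r ^ ((1 : ℝ) / 4) / p) ^ 2 * S := by
      rw [hS, Finset.mul_sum]
      exact Finset.sum_congr rfl fun i _ => by ring
    rw [this]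
    have e : ((1 / 4 * r ^ ((1 : ℝ) / 4) / p) ^ 2 * S) ^ 2
      = 1 / 256 * (r ^ ((1 : ℝ) / 4)) ^ 4 / p ^ 4 * S ^ 2 := by ring
    rw [e, h4]
    have : 0 ≤ r / p ^ 4 * S ^ 2 := by positivity
    have e' : 1 / 256 * r / p ^ 4 * S ^ 2 = 1 / 256 * (r / p ^ 4 * S ^ 2) := by ring
    linarith
  have hm : (2 * (1 / 4 + C₀ / 2) ^ 2 + 1) * (r / p ^ 4 * S ^ 2)
      ≤ (2 * (1 / 4 + C₀ / 2) ^ 2 + 1) * (1 / c₀ ^ 3 * (r / p * S ^ 2)) := by gcongr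
  have hm' : (2 * (1 / 4 + C₀ / 2) ^ 2 + 1) * (1 / c₀ ^ 3 * (r / p * S ^ 2))
      = (2 * (1 / 4 + C₀ / 2) ^ 2 + 1) / c₀ ^ 3 * (r / p * S ^ 2) := by ring
  linarith

theorem statement13 (d : ℕ) (hd : 1 ≤ d) (C₀ c₀ : ℝ) (hC₀ : 0 < C₀) (hc₀ : 0 < c₀) :
    ∃ C : ℝ, 0 < C ∧
      ∀ h φ : ℝ → ℝ,
        ContDiffOn ℝ (⊤ : ℕ∞) h (Set.Ioi 0) →
        (∀ r : ℝ, 0 < r → 0 ≤ h r) →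
        (∀ r : ℝ, 0 < r → c₀ ≤ deriv h r) →
        (∀ r : ℝ, 0 < r → r * deriv h r ≤ C₀ * h r) →
        (∀ r : ℝ, 0 < r → r * |deriv (deriv h) r| ≤ C₀ * deriv h r) →
        ContDiffOn ℝ (⊤ : ℕ∞) φ (Set.Ioi 0) →
        (∀ r : ℝ, 0 < r → r * deriv φ r = deriv h r) →
      ∀ ρ : (Fin d → ℝ) → ℝ, ContDiff ℝ (⊤ : ℕ∞) ρ → SpacePeriodic ρ → (∀ x, 0 < ρ x) →
        (∫ x in unitBox d, ∑ i, ∑ j, hess (fun y => Real.sqrt (ρ y)) x i j ^ 2)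
          + (∫ x in unitBox d, (∑ i, grad (fun y => ρ y ^ ((1 : ℝ) / 4)) x i ^ 2) ^ 2)
          ≤ C * ∫ x in unitBox d, h (ρ x) * ∑ i, ∑ j, hess (fun y => φ (ρ y)) x i j ^ 2 := by
  have hd0 : (0 : ℝ) < d := by exact_mod_cast hd
  refine ⟨C₀ / (2 * c₀ ^ 3) + (2 * (1 / 4 + C₀ / 2) ^ 2 + 1) / c₀ ^ 3 * (2 * (4 + d) * C₀),
    by positivity, ?_⟩
  intro h φ hh h0 h1 h2 h3 hφ hφ' ρ hρ hper hpos
  have hφd : ∀ r, 0 < r → HasDerivAt φ (deriv h r / r) r := by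
    intro r hr
    have hda : DifferentiableAt ℝ φ r :=
      (hφ.differentiableOn (by simp)).differentiableAt (Ioi_mem_nhds hr)
    have := hda.hasDerivAt
    rwa [show deriv φ r = deriv h r / r by rw [eq_div_iff hr.ne', mul_comm]; exact hφ' r hr] at this
  have hh' : ContDiffOn ℝ (⊤ : ℕ∞) (deriv h) (Set.Ioi 0) := hh.deriv_of_isOpen isOpen_Ioi (by simp)
  have hhd : ∀ r, 0 < r → HasDerivAt (deriv h) (deriv (deriv h) r) r := fun r hr =>
    ((hh'.differentiableOn (by simp)).differentiableAt (Ioi_mem_nhds hr)).hasDerivAt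
  have comp_smooth : ∀ g : ℝ → ℝ, ContDiffOn ℝ (⊤ : ℕ∞) g (Set.Ioi 0) →
      ContDiff ℝ (⊤ : ℕ∞) (fun y => g (ρ y)) := fun g hg =>
    contDiff_iff_contDiffAt.2 fun x =>
      (hg.contDiffAt (Ioi_mem_nhds (hpos x))).comp x hρ.contDiffAt
  set w : (Fin d → ℝ) → ℝ := fun y => φ (ρ y) with hw
  have hws : ContDiff ℝ (⊤ : ℕ∞) w := comp_smooth φ hφ
  have hwp : SpacePeriodic w := fun x n => by simp only [hw]; rw [hper x n]
  have hρd : Differentiable ℝ ρ := hρ.differentiable (by simp)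
  have hwi : ∀ i, ContDiff ℝ (⊤ : ℕ∞) (pd i w) := fun i => pd_contDiff i hws
  have hwid : ∀ i, Differentiable ℝ (pd i w) := fun i => (hwi i).differentiable (by simp)
  have hppos : ∀ x, 0 < deriv h (ρ x) := fun x => lt_of_lt_of_le hc₀ (h1 _ (hpos x))
  have hρi : ∀ i x, pd i ρ x = ρ x / deriv h (ρ x) * pd i w x := by
    intro i x
    have := pd_comp i (hφd (ρ x) (hpos x)) (hρd x)
    simp only [hw]
    rw [this]
    have := (hppos x).ne'
    have := (hpos x).ne'
    field_simp
  set S : (Fin d → ℝ) → ℝ := fun x => ∑ i, pd i w x ^ 2 with hSdef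
  have hSs : ContDiff ℝ (⊤ : ℕ∞) S := ContDiff.sum fun i _ => (hwi i).pow 2
  have hSd : Differentiable ℝ S := hSs.differentiable (by simp)
  -- the vector field
  set V : Fin d → (Fin d → ℝ) → ℝ := fun i x => (ρ x * S x) * pd i w x with hV
  have hVs : ∀ i, ContDiff ℝ (⊤ : ℕ∞) (V i) := fun i => (hρ.mul hSs).mul (hwi i)
  have hVp : ∀ i, SpacePeriodic (V i) := by
    intro i x n
    simp only [hV, hSdef]
    rw [hper x n, pd_periodic i hwp x n]
    congr 2
    exact Finset.sum_congr rfl fun j _ => by rw [pd_periodic j hwp x n]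
  have hdiv : ∫ x in unitBox d, ∑ i, pd i (V i) x = 0 := by
    obtain ⟨n, rfl⟩ : ∃ n, d = n + 1 := ⟨d - 1, by omega⟩
    exact integral_dvg_zero V hVs hVp
  have hSi : ∀ i x, pd i S x = ∑ j, 2 * pd j w x * hess w x i j := by
    intro i x
    simp only [hSdef]
    rw [pd_sum i (f := fun j x => pd j w x ^ 2) (fun j => ((hwid j) x).pow 2)]
    refine Finset.sum_congr rfl fun j _ => ?_
    have := pd_comp i (g := fun t => t ^ 2) (g' := 2 * pd j w x) (f := pd j w) (x := x)
      (by simpa using hasDerivAt_pow 2 (pd j w x)) (hwid j x)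
    exact this
  have hVi : ∀ x, ∑ i, pd i (V i) x = ∑ i, ((ρ x / deriv h (ρ x) * pd i w x) * S x * pd i w x
      + ρ x * (∑ j, 2 * pd j w x * hess w x i j) * pd i w x + ρ x * S x * hess w x i i) := by
    intro x
    refine Finset.sum_congr rfl fun i _ => ?_
    simp only [hV]
    rw [pd_mul i (f := fun x => ρ x * S x) ((hρd x).mul (hSd x)) (hwid i x), pd_mul i (hρd x) (hSd x), hρi, hSi]
    simp only [hess]
    ring
  -- Hessian of the square root
  have hsqrt1 : ∀ j, pd j (fun y => √(ρ y)) =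
      fun y => (√(ρ y) / (2 * deriv h (ρ y))) * pd j w y := by
    intro j
    funext y
    rw [pd_comp j (Real.hasDerivAt_sqrt (hpos y).ne') (hρd y), hρi]
    have h5 := (hppos y).ne'
    have h6 := (Real.sqrt_pos.2 (hpos y)).ne'
    have h7 : ρ y = √(ρ y) ^ 2 := (Real.sq_sqrt (hpos y).le).symm
    have h8 : 1 / (2 * √(ρ y)) * ρ y = √(ρ y) / 2 := by
      rw [div_mul_eq_mul_div, div_eq_div_iff (by positivity) (by positivity)]
      nlinarith
    calc _ = (1 / (2 * √(ρ y)) * ρ y) / deriv h (ρ y) * pd j w y := by ring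
      _ = _ := by rw [h8]; ring
  have hsqrt2 : ∀ x i j, hess (fun y => √(ρ y)) x i j
      = √(ρ x) / (2 * deriv h (ρ x)) * hess w x i j
        + (1 / 4 - ρ x * deriv (deriv h) (ρ x) / (2 * deriv h (ρ x)))
          * (√(ρ x) / deriv h (ρ x) ^ 2) * (pd i w x * pd j w x) := by
    intro x i j
    have h5 := (hppos x).ne'
    have h6 := (Real.sqrt_pos.2 (hpos x)).ne'
    have hq : HasDerivAt (fun r => √r / (2 * deriv h r))
        ((1 / (2 * √(ρ x)) * (2 * deriv h (ρ x)) - √(ρ x) * (2 * deriv (deriv h) (ρ x)))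
          / (2 * deriv h (ρ x)) ^ 2) (ρ x) :=
      (Real.hasDerivAt_sqrt (hpos x).ne').div ((hhd _ (hpos x)).const_mul 2)
        (mul_ne_zero two_ne_zero h5)
    simp only [hess]
    show pd i (pd j (fun y => √(ρ y))) x = _
    rw [hsqrt1 j]
    have hqd : DifferentiableAt ℝ (fun y => √(ρ y) / (2 * deriv h (ρ y))) x :=
      hq.differentiableAt.comp x (hρd x)
    rw [pd_mul i hqd (hwid j x), pd_comp i hq (hρd x), hρi]
    have h7 : √(ρ x) ^ 2 = ρ x := Real.sq_sqrt (hpos x).le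
    clear hq hqd
    show _ = √(ρ x) / (2 * deriv h (ρ x)) * pd i (pd j w) x + _
    change _ + √(ρ x) / (2 * deriv h (ρ x)) * pd i (pd j w) x = _
    generalize √(ρ x) = s at *
    generalize deriv (deriv h) (ρ x) = k at *
    generalize deriv h (ρ x) = p at *
    rw [← h7]
    field_simp
    ring
  have hquart : ∀ x i, grad (fun y => ρ y ^ ((1 : ℝ) / 4)) x i
      = 1 / 4 * ρ x ^ ((1 : ℝ) / 4) / deriv h (ρ x) * pd i w x := by
    intro x i
    simp only [grad]
    rw [pd_comp i (Real.hasDerivAt_rpow_const (p := (1 : ℝ) / 4) (Or.inl (hpos x).ne')) (hρd x),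
      hρi, Real.rpow_sub_one (hpos x).ne']
    have := (hpos x).ne'
    field_simp
  -- continuity
  have hcH : ∀ f : (Fin d → ℝ) → ℝ, ContDiff ℝ (⊤ : ℕ∞) f →
      Continuous (fun x => ∑ i, ∑ j, hess f x i j ^ 2) := fun f hf =>
    continuous_finsetSum _ fun i _ => continuous_finsetSum _ fun j _ =>
      ((pd_contDiff i (pd_contDiff j hf)).continuous).pow 2
  have hci : ∀ f : (Fin d → ℝ) → ℝ, Continuous f → IntegrableOn f (unitBox d) := fun f hf =>
    hf.continuousOn.integrableOn_compact isCompact_Icc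
  have hsm1 : ContDiff ℝ (⊤ : ℕ∞) (fun y => √(ρ y)) := hρ.sqrt fun x => (hpos x).ne'
  have hsm2 : ContDiff ℝ (⊤ : ℕ∞) (fun y => ρ y ^ ((1 : ℝ) / 4)) :=
    hρ.rpow_const_of_ne fun x => (hpos x).ne'
  have hi1 := hci _ (hcH _ hsm1)
  have hi2 : IntegrableOn (fun x => (∑ i, grad (fun y => ρ y ^ ((1 : ℝ) / 4)) x i ^ 2) ^ 2)
      (unitBox d) := hci _ ((continuous_finsetSum _ fun i _ =>
        ((pd_contDiff i hsm2).continuous).pow 2).pow 2)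
  have hi3 : IntegrableOn (fun x => h (ρ x) * ∑ i, ∑ j, hess w x i j ^ 2) (unitBox d) :=
    hci _ ((comp_smooth h hh).continuous.mul (hcH _ hws))
  have hi4 : IntegrableOn (fun x => ∑ i, pd i (V i) x) (unitBox d) :=
    hci _ (continuous_finsetSum _ fun i _ => (pd_contDiff i (hVs i)).continuous)
  rw [← integral_add hi1 hi2]
  set B : ℝ := (2 * (1 / 4 + C₀ / 2) ^ 2 + 1) / c₀ ^ 3 with hB
  have hB0 : 0 ≤ B := by positivity
  have hrhs : (C₀ / (2 * c₀ ^ 3) + B * (2 * (4 + d) * C₀))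
        * ∫ x in unitBox d, h (ρ x) * ∑ i, ∑ j, hess w x i j ^ 2
      = ∫ x in unitBox d, ((C₀ / (2 * c₀ ^ 3) + B * (2 * (4 + d) * C₀))
        * (h (ρ x) * ∑ i, ∑ j, hess w x i j ^ 2) + 2 * B * ∑ i, pd i (V i) x) := by
    rw [integral_add (hi3.const_mul _) (hi4.const_mul _), integral_const_mul, integral_const_mul,
      hdiv, mul_zero, add_zero]
  rw [hrhs]
  refine setIntegral_mono (hi1.add hi2) ((hi3.const_mul _).add (hi4.const_mul _)) fun x => ?_
  have A1 := alg_hess (ρ x) (deriv h (ρ x)) (deriv (deriv h) (ρ x)) C₀ c₀ (h (ρ x)) (hpos x) hc₀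
    (h1 _ (hpos x)) hC₀ (h3 _ (hpos x)) (h2 _ (hpos x)) (fun i => pd i w x) (hess w x) (S x) rfl
  have A2 := alg_div hd (ρ x) (deriv h (ρ x)) (hpos x) (hppos x) (fun i => pd i w x) (hess w x)
    (S x) rfl
  rw [← hVi x] at A2
  simp only [hsqrt2, hquart]
  have hHn : 0 ≤ ∑ i, ∑ j, hess w x i j ^ 2 :=
    Finset.sum_nonneg fun i _ => Finset.sum_nonneg fun j _ => sq_nonneg _
  have A3 : 2 * (4 + (d : ℝ)) * (ρ x * deriv h (ρ x)) * ∑ i, ∑ j, hess w x i j ^ 2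
      ≤ 2 * (4 + d) * (C₀ * h (ρ x)) * ∑ i, ∑ j, hess w x i j ^ 2 := by
    have := h2 _ (hpos x)
    gcongr
  have A4 := mul_le_mul_of_nonneg_left (A2.trans (add_le_add_right A3 _)) hB0
  refine A1.trans ?_
  rw [← hB]
  refine (add_le_add_right A4 _).trans (le_of_eq ?_)
  ring

end
end
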